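/- Let G be a graph on n vertices with adjacency matrix A and stability number α(G), and let k be a real scalar with α(G) < k. Then the quartic form p_{A,k}(x) := (x²)^T (kA + kI - J) (x²), where x² denotes the entrywise square of x, is positive definite, i.e., p_{A,k}(x) > 0 for all x ∈ ℝ^n with x ≠ 0. -/

import Mathlib

open Matrix
open scoped RealInnerProductSpace

/-- The stability (independence) number of a graph: the size of the largest set of
pairwise non-adjacent vertices. -/
noncomputable def stabilityNumber {V : Type*} (G : SimpleGraph V) : ℕ :=
  sSup {k | ∃ s : Finset V, s.card = k ∧ ∀ i ∈ s, ∀ j ∈ s, i ≠ j → ¬ G.Adj i j}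

/-- The matrix `M_{A,k} = k A + k I - J`, where `J` is the all-ones matrix. -/
noncomputable def MAk {n : ℕ} (A : Matrix (Fin n) (Fin n) ℝ) (k : ℝ) : Matrix (Fin n) (Fin n) ℝ :=
  k • A + k • (1 : Matrix (Fin n) (Fin n) ℝ) - Matrix.of (fun _ _ => (1 : ℝ))

/-- Entrywise square of a vector. -/
def vsq {n : ℕ} (x : Fin n → ℝ) : Fin n → ℝ := fun i => (x i) ^ 2

/-- A symmetric matrix `M` is copositive if `xᵀ M x ≥ 0` for all entrywise nonnegative `x`. -/
def Copositive {n : ℕ} (M : Matrix (Fin n) (Fin n) ℝ) : Prop :=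
  ∀ x : Fin n → ℝ, (∀ i, 0 ≤ x i) → 0 ≤ x ⬝ᵥ M.mulVec x

/-- The quartic form `p_M(x) = (x²)ᵀ M (x²)`. -/
noncomputable def quarticForm {n : ℕ} (M : Matrix (Fin n) (Fin n) ℝ) :
    EuclideanSpace ℝ (Fin n) → ℝ :=
  fun x => vsq x ⬝ᵥ M.mulVec (vsq x)

/-- The quadratic form `q_M(x) = xᵀ M x`. -/
noncomputable def quadForm {n : ℕ} (M : Matrix (Fin n) (Fin n) ℝ) :
    EuclideanSpace ℝ (Fin n) → ℝ :=
  fun x => x ⬝ᵥ M.mulVec x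

/-- `xm` is a local minimizer of `f` over `Ω`: `xm ∈ Ω` and there is `ε > 0` such that
`f xm ≤ f x` for all `x ∈ Ω` with `‖x - xm‖ ≤ ε` (Euclidean norm). -/
def IsLocalMinimizer {n : ℕ} (f : EuclideanSpace ℝ (Fin n) → ℝ)
    (Ω : Set (EuclideanSpace ℝ (Fin n))) (xm : EuclideanSpace ℝ (Fin n)) : Prop :=
  xm ∈ Ω ∧ ∃ ε > 0, ∀ x ∈ Ω, ‖x - xm‖ ≤ ε → f xm ≤ f x

/-- `xm` is a strict local minimizer of `f` over `Ω`: `xm ∈ Ω` and there is `ε > 0` such that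
`f xm < f x` for all `x ∈ Ω` with `x ≠ xm` and `‖x - xm‖ ≤ ε` (Euclidean norm). -/
def IsStrictLocalMinimizer {n : ℕ} (f : EuclideanSpace ℝ (Fin n) → ℝ)
    (Ω : Set (EuclideanSpace ℝ (Fin n))) (xm : EuclideanSpace ℝ (Fin n)) : Prop :=
  xm ∈ Ω ∧ ∃ ε > 0, ∀ x ∈ Ω, x ≠ xm → ‖x - xm‖ ≤ ε → f xm < f x

/-!
The proof is the Motzkin–Straus argument. Fix a nonnegative weight `y` on the vertices, and let
`i`, `j` be adjacent vertices carrying positive weight. Along the line `y + t (eᵢ - eⱼ)` the form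
`yᵀ (A + I) y` is affine in `t`, because `(A + I)ᵢᵢ + (A + I)ⱼⱼ = 2 (A + I)ᵢⱼ`. So moving the whole
weight of one of the two vertices to the other, in the direction of nonpositive slope, keeps the
total weight, does not increase the form, and shrinks the support. Once the support is stable,
Cauchy–Schwarz gives `(∑ yᵢ)² ≤ α(G) ∑ yᵢ² ≤ α(G) yᵀ (A + I) y`. Finally
`yᵀ (kA + kI - J) y = k yᵀ (A + I) y - (∑ yᵢ)²`, which is positive when `k > α(G)` and `y ≠ 0`.
-/

section TransferWeight

variable {V R : Type*} [DecidableEq V] [Ring R]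

/-- The weight obtained from `y` by moving all the weight of the vertex `j` to the vertex `i`.
It is written as a translate of `y`, so that `i = j` leaves `y` unchanged and a quadratic form can
be expanded at `y`. -/
def transferWeight (y : V → R) (i j : V) : V → R :=
  y + y j • (Pi.single i 1 - Pi.single j 1)

lemma transferWeight_eq_update (y : V → R) {i j : V} (hij : i ≠ j) :
    transferWeight y i j = Function.update (Function.update y j 0) i (y i + y j) := by
  ext l
  rcases eq_or_ne l i with rfl | hli
  · simp [transferWeight, hij]
  · rcases eq_or_ne l j with rfl | hlj
    · simp [transferWeight, hli]
    · simp [transferWeight, hli, hlj]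

lemma sum_transferWeight [Fintype V] (y : V → R) (i j : V) :
    ∑ l, transferWeight y i j l = ∑ l, y l := by
  simp [transferWeight, Finset.sum_add_distrib, ← Finset.mul_sum]

lemma support_transferWeight_ssubset {y : V → R} {i j : V} (hij : i ≠ j) (hi : y i ≠ 0)
    (hj : y j ≠ 0) : Function.support (transferWeight y i j) ⊂ Function.support y := by
  rw [transferWeight_eq_update y hij]
  refine (Set.ssubset_iff_of_subset fun l hl => ?_).2 ⟨j, hj, by simp [hij.symm]⟩
  rcases eq_or_ne l i with rfl | hli
  · exact hi
  · rcases eq_or_ne l j with rfl | hlj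
    · exact hj
    · simpa [hli, hlj] using hl

lemma transferWeight_nonneg [PartialOrder R] [IsOrderedAddMonoid R] {y : V → R} (hy : 0 ≤ y)
    {i j : V} (hij : i ≠ j) : 0 ≤ transferWeight y i j := by
  rw [transferWeight_eq_update y hij, le_update_iff]
  refine ⟨add_nonneg (hy i) (hy j), fun l _ => ?_⟩
  exact (le_update_iff.2 ⟨le_rfl, fun l _ => hy l⟩ : 0 ≤ Function.update y j 0) l

end TransferWeight

section QuadraticForm

variable {V R : Type*} [Fintype V]

lemma add_dotProduct_mulVec_add_of_isSymm [CommSemiring R] {B : Matrix V V R} (hB : B.IsSymm)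
    (y v : V → R) :
    (y + v) ⬝ᵥ B *ᵥ (y + v) = y ⬝ᵥ B *ᵥ y + 2 * (v ⬝ᵥ B *ᵥ y) + v ⬝ᵥ B *ᵥ v := by
  have hcross : y ⬝ᵥ B *ᵥ v = v ⬝ᵥ B *ᵥ y := by
    rw [dotProduct_mulVec, ← mulVec_transpose, hB.eq, dotProduct_comm]
  rw [mulVec_add, dotProduct_add, add_dotProduct, add_dotProduct, hcross]
  ring

variable [CommRing R]

lemma transferWeight_dotProduct_mulVec [DecidableEq V] {B : Matrix V V R} (hB : B.IsSymm)
    (y : V → R) (i j : V) :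
    transferWeight y i j ⬝ᵥ B *ᵥ transferWeight y i j =
      y ⬝ᵥ B *ᵥ y + 2 * y j * ((B *ᵥ y) i - (B *ᵥ y) j) +
        y j ^ 2 * (B i i + B j j - 2 * B i j) := by
  rw [transferWeight, add_dotProduct_mulVec_add_of_isSymm hB]
  simp only [mulVec_smul, mulVec_sub, mulVec_single_one, smul_dotProduct, dotProduct_smul,
    sub_dotProduct, single_one_dotProduct, Pi.sub_apply, col_apply, smul_eq_mul, hB.apply i j]
  ring

variable [LinearOrder R] [IsStrictOrderedRing R]

lemma transferWeight_dotProduct_mulVec_le [DecidableEq V] {B : Matrix V V R} (hB : B.IsSymm)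
    {y : V → R} {i j : V} (hdiag : B i i + B j j ≤ 2 * B i j) (hj : 0 ≤ y j)
    (hslope : (B *ᵥ y) i ≤ (B *ᵥ y) j) :
    transferWeight y i j ⬝ᵥ B *ᵥ transferWeight y i j ≤ y ⬝ᵥ B *ᵥ y := by
  have hlinear : 2 * y j * ((B *ᵥ y) i - (B *ᵥ y) j) ≤ 0 :=
    mul_nonpos_of_nonneg_of_nonpos (by positivity) (sub_nonpos.2 hslope)
  have hquadratic : y j ^ 2 * (B i i + B j j - 2 * B i j) ≤ 0 :=
    mul_nonpos_of_nonneg_of_nonpos (sq_nonneg _) (sub_nonpos.2 hdiag)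
  rw [transferWeight_dotProduct_mulVec hB]
  linarith

end QuadraticForm

section MotzkinStraus

variable {V R : Type*} [Fintype V] [CommRing R] [LinearOrder R] [IsStrictOrderedRing R]
  (G : SimpleGraph V)

lemma dotProduct_self_le_dotProduct_adjMatrix_add_one_mulVec [DecidableEq V] [DecidableRel G.Adj]
    {y : V → R} (hy : 0 ≤ y) : y ⬝ᵥ y ≤ y ⬝ᵥ (G.adjMatrix R + 1) *ᵥ y := by
  have hadj : 0 ≤ G.adjMatrix R *ᵥ y := fun i => by
    rw [SimpleGraph.adjMatrix_mulVec_apply]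
    exact Finset.sum_nonneg fun j _ => hy j
  rw [add_mulVec, one_mulVec, dotProduct_add]
  exact le_add_of_nonneg_left (dotProduct_nonneg_of_nonneg hy hadj)

lemma exists_transferWeight_of_not_isIndepSet_support [DecidableEq V] [DecidableRel G.Adj]
    {y : V → R} (hy : 0 ≤ y) (hsupp : ¬ G.IsIndepSet (Function.support y)) :
    ∃ i j, i ≠ j ∧ y i ≠ 0 ∧ y j ≠ 0 ∧
      transferWeight y i j ⬝ᵥ (G.adjMatrix R + 1) *ᵥ transferWeight y i j ≤
        y ⬝ᵥ (G.adjMatrix R + 1) *ᵥ y := by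
  set B := G.adjMatrix R + 1 with hB
  have hsymm : B.IsSymm := G.isSymm_adjMatrix.add isSymm_one
  have hdiag {i j : V} (hij : G.Adj i j) : B i i + B j j ≤ 2 * B i j := by
    simp [hB, hij, hij.ne, one_add_one_eq_two]
  simp only [Set.Pairwise, not_forall, not_not] at hsupp
  obtain ⟨i, hi, j, hj, hne, hij⟩ := hsupp
  rcases le_total ((B *ᵥ y) i) ((B *ᵥ y) j) with hslope | hslope
  · exact ⟨i, j, hne, hi, hj,
      transferWeight_dotProduct_mulVec_le hsymm (hdiag hij) (hy j) hslope⟩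
  · exact ⟨j, i, hne.symm, hj, hi,
      transferWeight_dotProduct_mulVec_le hsymm (hdiag hij.symm) (hy i) hslope⟩

lemma exists_isIndepSet_support_dotProduct_le [DecidableEq V] [DecidableRel G.Adj]
    {y : V → R} (hy : 0 ≤ y) :
    ∃ z : V → R, G.IsIndepSet (Function.support z) ∧ 0 ≤ z ∧ ∑ i, z i = ∑ i, y i ∧
      z ⬝ᵥ (G.adjMatrix R + 1) *ᵥ z ≤ y ⬝ᵥ (G.adjMatrix R + 1) *ᵥ y := by
  induction hs : Function.support y using WellFoundedLT.induction generalizing y with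
  | ind s ih =>
    subst hs
    by_cases hsupp : G.IsIndepSet (Function.support y)
    · exact ⟨y, hsupp, hy, rfl, le_rfl⟩
    · obtain ⟨i, j, hij, hi, hj, hle⟩ := exists_transferWeight_of_not_isIndepSet_support G hy hsupp
      obtain ⟨z, hz_supp, hz_nonneg, hz_sum, hz_le⟩ :=
        ih _ (support_transferWeight_ssubset hij hi hj) (transferWeight_nonneg hy hij) rfl
      exact ⟨z, hz_supp, hz_nonneg, hz_sum.trans (sum_transferWeight y i j), hz_le.trans hle⟩

lemma sq_sum_le_indepNum_mul_dotProduct_self {y : V → R}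
    (hsupp : G.IsIndepSet (Function.support y)) : (∑ i, y i) ^ 2 ≤ G.indepNum * (y ⬝ᵥ y) := by
  classical
  set s := (Function.support y).toFinset
  have hcard : s.card ≤ G.indepNum :=
    SimpleGraph.IsIndepSet.card_le_indepNum (by simpa [s] using hsupp)
  have hsum : ∑ i ∈ s, y i = ∑ i, y i :=
    Finset.sum_subset (Finset.subset_univ s) (by simp [s])
  have hsum_sq : ∑ i ∈ s, y i ^ 2 = y ⬝ᵥ y := by
    simp only [dotProduct, ← sq]
    exact Finset.sum_subset (Finset.subset_univ s) (by simp [s])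
  calc (∑ i, y i) ^ 2 = (∑ i ∈ s, y i) ^ 2 := by rw [hsum]
    _ ≤ s.card * ∑ i ∈ s, y i ^ 2 := sq_sum_le_card_mul_sum_sq
    _ ≤ G.indepNum * ∑ i ∈ s, y i ^ 2 := by gcongr
    _ = G.indepNum * (y ⬝ᵥ y) := by rw [hsum_sq]

theorem motzkin_straus [DecidableEq V] [DecidableRel G.Adj] {y : V → R} (hy : 0 ≤ y) :
    (∑ i, y i) ^ 2 ≤ G.indepNum * (y ⬝ᵥ (G.adjMatrix R + 1) *ᵥ y) := by
  obtain ⟨z, hz_supp, hz_nonneg, hz_sum, hz_le⟩ := exists_isIndepSet_support_dotProduct_le G hy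
  calc (∑ i, y i) ^ 2 = (∑ i, z i) ^ 2 := by rw [hz_sum]
    _ ≤ G.indepNum * (z ⬝ᵥ z) := sq_sum_le_indepNum_mul_dotProduct_self G hz_supp
    _ ≤ G.indepNum * (z ⬝ᵥ (G.adjMatrix R + 1) *ᵥ z) := by
      gcongr
      exact dotProduct_self_le_dotProduct_adjMatrix_add_one_mulVec G hz_nonneg
    _ ≤ G.indepNum * (y ⬝ᵥ (G.adjMatrix R + 1) *ᵥ y) := by gcongr

end MotzkinStraus

lemma stabilityNumber_eq_indepNum {V : Type*} (G : SimpleGraph V) :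
    stabilityNumber G = G.indepNum := by
  refine congrArg sSup (Set.ext fun m => exists_congr fun s => ?_)
  rw [SimpleGraph.isNIndepSet_iff, and_comm]
  rfl

lemma vsq_nonneg {n : ℕ} (x : Fin n → ℝ) : 0 ≤ vsq x := fun i => sq_nonneg (x i)

lemma vsq_ne_zero {n : ℕ} {x : Fin n → ℝ} (hx : x ≠ 0) : vsq x ≠ 0 := by
  obtain ⟨i, hi⟩ := Function.ne_iff.1 hx
  exact Function.ne_iff.2 ⟨i, pow_ne_zero 2 hi⟩

lemma dotProduct_MAk_mulVec {n : ℕ} (A : Matrix (Fin n) (Fin n) ℝ) (k : ℝ) (y : Fin n → ℝ) :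
    y ⬝ᵥ MAk A k *ᵥ y = k * (y ⬝ᵥ (A + 1) *ᵥ y) - (∑ i, y i) ^ 2 := by
  have hones : of (fun _ _ => (1 : ℝ)) *ᵥ y = (∑ i, y i) • (1 : Fin n → ℝ) := by
    ext i
    simp [mulVec, dotProduct]
  rw [MAk, ← smul_add, sub_mulVec, smul_mulVec, dotProduct_sub, dotProduct_smul, hones,
    dotProduct_smul, dotProduct_one, smul_eq_mul, smul_eq_mul, sq]

/-- If `α(G) < k`, then the quartic form `p_{A,k}(x) = (x²)ᵀ (kA + kI - J) (x²)` is
positive definite. -/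
theorem pAk_positive_definite {n : ℕ} (G : SimpleGraph (Fin n)) [DecidableRel G.Adj]
    (k : ℝ) (hk : (stabilityNumber G : ℝ) < k) :
    ∀ x : Fin n → ℝ, x ≠ 0 → 0 < vsq x ⬝ᵥ (MAk (G.adjMatrix ℝ) k).mulVec (vsq x) := by
  intro x hx
  set y := vsq x
  have hy : 0 ≤ y := vsq_nonneg x
  have hform_pos : 0 < y ⬝ᵥ (G.adjMatrix ℝ + 1) *ᵥ y :=
    calc 0 < y ⬝ᵥ y := dotProduct_self_star_pos_iff.2 (vsq_ne_zero hx)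
      _ ≤ y ⬝ᵥ (G.adjMatrix ℝ + 1) *ᵥ y :=
        dotProduct_self_le_dotProduct_adjMatrix_add_one_mulVec G hy
  rw [stabilityNumber_eq_indepNum] at hk
  rw [dotProduct_MAk_mulVec, sub_pos]
  calc (∑ i, y i) ^ 2 ≤ G.indepNum * (y ⬝ᵥ (G.adjMatrix ℝ + 1) *ᵥ y) := motzkin_straus G hy
    _ < k * (y ⬝ᵥ (G.adjMatrix ℝ + 1) *ᵥ y) := mul_lt_mul_of_pos_right hk hform_pos
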